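/- Let a ≤ b ≤ τ be positive integers with b = ℓa + (a−1) for some integer ℓ ≥ 1 (i.e., b mod a = a−1) and τ + 1 − a ≥ b, and set n = τ+1−a+b, k = τ+1−a. Let F be a field, Z = [Z1 | Z2] an a×2a zero-band MDS generator matrix over F, C a b×(τ+1−b) super-regular matrix over F, and H the b×n parity-check matrix of the code C^I_{a,b,τ+1} of Construction 2. Then the diagonal embedding of ker H (i.e., SDE(ker H, S) with N = n and S = {0,1,…,n−1}) is an (a,b,τ) streaming code, and its rate k/n equals the optimal rate (τ+1−a)/(τ+1−a+b). -/

import Mathlib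

/-- The parity-check matrix `H` of the code `C^I_{a,b,τ+1}` of Construction 2
(`b = ℓa + a − 1`): `H(0:a−2, 0:a−2) = I_{a−1}`;
`H(ia−1:ia+a−2, ia−1:ia+a−2) = Z1` for `i ∈ {1,…,ℓ}`; `H(0:b−1, b:τ) = C`;
`H(a−1:2a−3, τ+1:τ+a−1) = Z2* = Z2(0:a−2, 0:a−2)`;
`H(ia−1:(i+1)a−2, τ+(i−1)a:τ+ia−1) = Z2` for `i ∈ {2,…,ℓ}`; all other entries
zero. -/
def constructionTwoH (F : Type*) [Field F] (a b τ : ℕ) (ha : 0 < a)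
    (Z1 Z2 : Matrix (Fin a) (Fin a) F)
    (C : Matrix (Fin b) (Fin (τ + 1 - b)) F) :
    Matrix (Fin b) (Fin (τ + 1 - a + b)) F :=
  Matrix.of fun u v =>
    if hv1 : (v : ℕ) < a - 1 then (if (u : ℕ) = (v : ℕ) then 1 else 0)
    else if hv2 : (v : ℕ) < b then
      if h : a - 1 ≤ (u : ℕ) ∧ ((u : ℕ) - (a - 1)) / a = ((v : ℕ) - (a - 1)) / a then
        Z1 ⟨((u : ℕ) - (a - 1)) % a, Nat.mod_lt _ ha⟩
           ⟨((v : ℕ) - (a - 1)) % a, Nat.mod_lt _ ha⟩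
      else 0
    else if hv3 : (v : ℕ) ≤ τ then
      C u ⟨(v : ℕ) - b, by omega⟩
    else if hv4 : (v : ℕ) < τ + a then
      if h : a - 1 ≤ (u : ℕ) ∧ (u : ℕ) ≤ 2 * a - 3 then
        Z2 ⟨(u : ℕ) - (a - 1), by omega⟩ ⟨(v : ℕ) - (τ + 1), by omega⟩
      else 0
    else
      if h : a - 1 ≤ (u : ℕ) ∧ ((u : ℕ) - (a - 1)) / a = ((v : ℕ) - τ - a) / a + 1 then
        Z2 ⟨((u : ℕ) - (a - 1)) % a, Nat.mod_lt _ ha⟩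
           ⟨((v : ℕ) - τ) % a, Nat.mod_lt _ ha⟩
      else 0

/-!
Along a diagonal a packet stream is a codeword of `ker H`, so the symbol at position `j` must be
shown to vanish whenever the earlier symbols vanish and the nonzero positions up to `j + τ` form an
admissible erasure pattern. Apart from the columns of `C`, a row of `H` meets either one symbol of
the identity block or one block `[Z1 | Z2]`, in which the zero band makes `Z1` lower and `Z2` upper
triangular. Under either erasure pattern, enough rows therefore have only zero symbols outside `C`,
and super-regularity of `C` forces the symbols at positions `b, …, τ` to vanish. Each block
`[Z1 | Z2]` is then a parity check of its own. A block with a column at position `j` meets at most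
`a` nonzero symbols, and the MDS property of `Z` kills them.
-/

section LinearAlgebra

open Matrix

variable {m n R : Type*} [CommRing R]

/-- A matrix all of whose square submatrices have nonzero determinant; over a field these are the
super-regular matrices. -/
def IsSuperRegular (A : Matrix m n R) : Prop :=
  ∀ (s : ℕ) (ri : Fin s → m) (ci : Fin s → n),
    Function.Injective ri → Function.Injective ci → (A.submatrix ri ci).det ≠ 0

/-- A matrix any `Fintype.card m` columns of which are linearly independent, where `m` indexes the
rows: the generator matrix of an MDS code. -/
def IsMDSGenerator [Fintype m] (A : Matrix m n R) : Prop :=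
  ∀ cols : Finset n, cols.card = Fintype.card m → LinearIndepOn R A.col cols

theorem IsSuperRegular.eq_zero_of_mulVec_eq_zero [IsDomain R] [Fintype n] [DecidableEq R]
    {A : Matrix m n R} (hA : IsSuperRegular A) {x : n → R} {rows : Finset m}
    (hcard : hammingNorm x ≤ rows.card) (hx : ∀ u ∈ rows, (A *ᵥ x) u = 0) : x = 0 := by
  obtain ⟨rows', hsub, hrows'⟩ := Finset.exists_subset_card_eq hcard
  let ri : Fin (hammingNorm x) → m := fun i => (Finset.equivFinOfCardEq hrows').symm i
  let supp := Finset.equivFinOfCardEq (s := {i | x i ≠ 0}) (n := hammingNorm x) rfl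
  let ci : Fin (hammingNorm x) → n := fun i => supp.symm i
  have hdet : (A.submatrix ri ci).det ≠ 0 := hA _ ri ci
    (Subtype.val_injective.comp (Equiv.injective _))
    (Subtype.val_injective.comp (Equiv.injective _))
  have hsubmatrix : A.submatrix ri ci *ᵥ (x ∘ ci) = 0 := by
    funext i
    rw [Pi.zero_apply, ← hx (ri i) (hsub (Finset.coe_mem _))]
    calc ∑ k, A (ri i) (ci k) * x (ci k)
        = ∑ w : {w // w ∈ ({i | x i ≠ 0} : Finset n)}, A (ri i) w * x w :=
          supp.symm.sum_comp fun w => A (ri i) w * x w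
      _ = ∑ w with x w ≠ 0, A (ri i) w * x w :=
          Finset.sum_coe_sort _ fun w => A (ri i) w * x w
      _ = ∑ w, A (ri i) w * x w :=
          Finset.sum_filter_of_ne fun w _ hw => right_ne_zero_of_mul hw
  have hzero : x ∘ ci = 0 := Matrix.eq_zero_of_mulVec_eq_zero hdet hsubmatrix
  funext w
  by_contra hw
  have hw' := congrFun hzero (supp ⟨w, by simpa using hw⟩)
  simp only [ci, Function.comp_apply, Equiv.symm_apply_apply] at hw'
  exact hw hw'

theorem IsSuperRegular.eq_zero_of_mulVec_eq_zero_fin [IsDomain R] [Fintype n] [DecidableEq R]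
    {k : ℕ} {A : Matrix (Fin k) n R} (hA : IsSuperRegular A) {x : n → R} {rows : Finset ℕ}
    (hcard : hammingNorm x ≤ rows.card) (hx : ∀ u ∈ rows, ∃ hu : u < k, (A *ᵥ x) ⟨u, hu⟩ = 0) :
    x = 0 := by
  refine hA.eq_zero_of_mulVec_eq_zero (rows := rows.attachFin fun u hu => (hx u hu).1) ?_ ?_
  · rwa [Finset.card_attachFin]
  · exact fun u hu => (hx u (Finset.mem_attachFin _ |>.1 hu)).2

theorem IsMDSGenerator.eq_zero_of_mulVec_eq_zero [Fintype m] [Fintype n] [DecidableEq R]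
    {A : Matrix m n R} (hA : IsMDSGenerator A) (hmn : Fintype.card m ≤ Fintype.card n) {x : n → R}
    (hcard : hammingNorm x ≤ Fintype.card m) (hx : A *ᵥ x = 0) : x = 0 := by
  obtain ⟨cols, hsub, hcols⟩ := Finset.exists_superset_card_eq hcard hmn
  have hsupp : ∀ d ∉ cols, x d = 0 := fun d hd => by
    by_contra hxd
    exact hd (hsub (by simpa using hxd))
  have hcomb : ∑ d ∈ cols, x d • A.col d = 0 := by
    funext r
    rw [← hx, Finset.sum_apply]
    refine (Finset.sum_subset cols.subset_univ fun d _ hd => ?_).trans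
      (Finset.sum_congr rfl fun d _ => mul_comm _ _)
    rw [hsupp d hd, zero_smul, Pi.zero_apply]
  have hcols_zero := linearIndepOn_finset_iff.1 (hA cols hcols) x hcomb
  funext d
  by_cases hd : d ∈ cols
  exacts [hcols_zero d hd, hsupp d hd]

theorem IsMDSGenerator.submatrix_right [Fintype m] {n' : Type*} {A : Matrix m n R}
    (hA : IsMDSGenerator A) (f : n' ↪ n) : IsMDSGenerator (A.submatrix id f) := fun cols hcols => by
  have h := hA (cols.map f) (by rw [Finset.card_map, hcols])
  rw [Finset.coe_map] at h
  exact h.comp_of_image f.injective.injOn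

theorem mulVec_apply_eq_zero_of_blockTriangular {α : Type*} [LinearOrder α] [Fintype m]
    {M : Matrix m m R} {b : m → α} (hM : M.BlockTriangular b) {x : m → R} {i : m}
    (hx : ∀ j, b i ≤ b j → x j = 0) : (M *ᵥ x) i = 0 :=
  Finset.sum_eq_zero fun j _ => (lt_or_ge (b j) (b i)).elim
    (fun hj => mul_eq_zero_of_left (hM hj) _) (fun hj => mul_eq_zero_of_right _ (hx j hj))

theorem hammingNorm_le_card_of_inl_or_inr {ι β : Type*} [Fintype ι] [Zero β] [DecidableEq β]
    {x : ι ⊕ ι → β} (hx : ∀ d, x (.inl d) = 0 ∨ x (.inr d) = 0) :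
    hammingNorm x ≤ Fintype.card ι := by
  refine Finset.card_le_card_of_injOn (Sum.elim id id) (fun _ _ => Finset.mem_univ _) ?_
  rintro (d | d) hd (e | e) he rfl
  · rfl
  · exact ((hx d).elim (Finset.mem_filter.1 hd).2 (Finset.mem_filter.1 he).2).elim
  · exact ((hx d).elim (Finset.mem_filter.1 he).2 (Finset.mem_filter.1 hd).2).elim
  · rfl

end LinearAlgebra

section ZeroExtend

open Matrix

variable {α : Type*} {n : ℕ}

/-- A word of length `n` as a sequence indexed by `ℕ`, with zeros from index `n` on. -/
def zeroExtend [Zero α] (c : Fin n → α) : ℕ → α :=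
  fun v => if hv : v < n then c ⟨v, hv⟩ else 0

@[simp]
theorem zeroExtend_val [Zero α] (c : Fin n → α) (i : Fin n) : zeroExtend c i = c i :=
  dif_pos i.isLt

theorem zeroExtend_of_le [Zero α] (c : Fin n → α) {v : ℕ} (hv : n ≤ v) : zeroExtend c v = 0 :=
  dif_neg hv.not_gt

theorem dotProduct_eq_dotProduct_zeroExtend_comp [NonUnitalNonAssocSemiring α] {ι : Type*}
    [Fintype ι] {h c : Fin n → α} {x : ι → α} {e : ι → ℕ} (he : Function.Injective e)
    (hx : ∀ i (hi : e i < n), h ⟨e i, hi⟩ = x i) (h0 : ∀ v : Fin n, ↑v ∉ Set.range e → h v = 0) :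
    h ⬝ᵥ c = x ⬝ᵥ (zeroExtend c ∘ e) := by
  have hlt : ∀ i, x i * zeroExtend c (e i) ≠ 0 → e i < n := fun i hi => by
    by_contra hn
    exact hi (by rw [zeroExtend_of_le c (not_lt.1 hn), mul_zero])
  refine (Finset.sum_bij_ne_zero (fun i _ hi => ⟨e i, hlt i hi⟩) (fun _ _ _ => Finset.mem_univ _)
    (fun i _ _ k _ _ hik => he (Fin.mk.inj hik)) (fun v _ hv => ?_) fun i _ hi => ?_).symm
  · obtain ⟨i, hi⟩ : ↑v ∈ Set.range e := by
      by_contra hmem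
      exact hv (by rw [h0 v hmem, zero_mul])
    refine ⟨i, Finset.mem_univ _, ?_, Fin.ext hi⟩
    simpa only [← hx i (hi ▸ v.isLt), Function.comp_apply, hi, zeroExtend_val] using hv
  · rw [hx i, ← zeroExtend_val c, Function.comp_apply]

end ZeroExtend

section DiagonalEmbedding

variable {α : Type*} {n : ℕ}

/-- The packet streams each of whose diagonals `x 0 s, x 1 (s + 1), …, x (n - 1) (s + n - 1)` is a
word of the block code `K`. -/
def diagonalEmbedding (K : Set (Fin n → α)) : Set (ℤ → Fin n → α) :=
  {x | ∀ s : ℤ, (fun i : Fin n => x (s + ((i : ℕ) : ℤ)) i) ∈ K}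

/-- A packet-level code that recovers the packet at every time `t` by time `t + τ` from at most `a`
erasures, or from erasures confined to a burst of length `b` starting at `t`. -/
def IsStreamingCode (a b τ : ℕ) (P : Set (ℤ → α)) : Prop :=
  ∀ (t : ℤ) (E : Finset ℤ), ↑E ⊆ Set.Icc t (t + (τ : ℤ)) → t ∈ E →
    (E.card ≤ a ∨ ∀ e ∈ E, e ≤ t + (b : ℤ) - 1) →
    ∀ x ∈ P, ∀ y ∈ P, (∀ t' : ℤ, t' < t → x t' = y t') →
      (∀ t' : ℤ, t' ∈ Set.Icc t (t + (τ : ℤ)) → t' ∉ E → x t' = y t') → x t = y t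

/-- The positions `v ≤ j + τ` at which the word `c` is nonzero: the erasures needed to confuse `c`
with zero within delay `τ` of position `j`. -/
def windowSupport [Zero α] [DecidableEq α] (τ : ℕ) (c : Fin n → α) (j : ℕ) : Finset ℕ :=
  {v ∈ Finset.range (j + τ + 1) | zeroExtend c v ≠ 0}

theorem mem_windowSupport [Zero α] [DecidableEq α] {τ : ℕ} {c : Fin n → α} {j v : ℕ} :
    v ∈ windowSupport τ c j ↔ v ≤ j + τ ∧ zeroExtend c v ≠ 0 := by
  rw [windowSupport, Finset.mem_filter, Finset.mem_range, Nat.lt_succ_iff]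

/-- The block-code property behind `IsStreamingCode`: once its earlier symbols are known to vanish,
the symbol of a word of `K` at position `j` is determined by the positions `v ≤ j + τ`, despite
`a` erasures or a burst of length `b` starting at `j`. -/
def IsDelayDecodable [Zero α] [DecidableEq α] (a b τ : ℕ) (K : Set (Fin n → α)) : Prop :=
  ∀ c ∈ K, ∀ j : ℕ, (∀ v < j, zeroExtend c v = 0) →
    ((windowSupport τ c j).card ≤ a ∨ ∀ v ∈ windowSupport τ c j, v < j + b) → zeroExtend c j = 0

theorem isStreamingCode_diagonalEmbedding [AddGroup α] [DecidableEq α] {a b τ : ℕ}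
    {K : AddSubgroup (Fin n → α)} (hK : IsDelayDecodable a b τ (K : Set (Fin n → α))) :
    IsStreamingCode a b τ (diagonalEmbedding (K : Set (Fin n → α))) := by
  intro t E _ _ hE x hx y hy hpast hwindow
  funext j
  let c : Fin n → α := fun i => x (t - j + (i : ℕ)) i - y (t - j + (i : ℕ)) i
  have hagree : ∀ v : ℕ, x (t - j + v) = y (t - j + v) → zeroExtend c v = 0 := fun v hv => by
    rcases lt_or_ge v n with hn | hn
    · exact (zeroExtend_val c ⟨v, hn⟩).trans (sub_eq_zero.2 (congrFun hv _))
    · exact zeroExtend_of_le c hn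
  have hearlier : ∀ v < (j : ℕ), zeroExtend c v = 0 := fun v hv =>
    hagree v (hpast _ (by omega))
  have herased : ∀ v ∈ windowSupport τ c j, t - j + v ∈ E := fun v hv => by
    obtain ⟨hvτ, hv0⟩ := mem_windowSupport.1 hv
    have hjv : (j : ℕ) ≤ v := not_lt.1 fun h => hv0 (hearlier v h)
    by_contra hvE
    exact hv0 (hagree v (hwindow _ ⟨by omega, by omega⟩ hvE))
  have hcj : zeroExtend c j = 0 := by
    refine hK c (K.sub_mem (hx (t - j)) (hy (t - j))) j hearlier (hE.imp (fun hcard => ?_) ?_)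
    · refine (Finset.card_le_card_of_injOn (fun v : ℕ => t - j + v) herased ?_).trans hcard
      exact fun v _ w _ hvw => by simpa using hvw
    · intro hburst v hv
      have := hburst _ (herased v hv)
      omega
  rw [zeroExtend_val] at hcj
  simpa only [c, sub_add_cancel] using sub_eq_zero.1 hcj

end DiagonalEmbedding

section ConstructionTwo

open Matrix

/-- The positions, within the codeword, of the columns of the `m`-th block `[Z1 | Z2]` of the
parity-check matrix of Construction 2, blocks being numbered from `0`. The last column of the
block `m = 0` is deleted by Construction 2 and gets the position `τ + 1 - a + b` just past the end
of the codeword. -/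
def blockPosition (a b τ m : ℕ) : Fin a ⊕ Fin a → ℕ
  | .inl d => a - 1 + m * a + d
  | .inr d =>
    if m = 0 then (if d + 1 = a then τ + 1 - a + b else τ + 1 + d) else τ + m * a + d

variable {a b τ ℓ : ℕ}

theorem add_mul_lt_mul_of_lt {m r : ℕ} (hm : m < ℓ) (hr : r < a) : m * a + r < ℓ * a := by
  nlinarith

theorem add_mul_add_sub_div_mod (k m : ℕ) (r : Fin a) :
    (k + m * a + r - k) / a = m ∧ (k + m * a + r - k) % a = r := by
  rw [add_assoc, Nat.add_sub_cancel_left, Nat.div_mod_unique r.pos]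
  exact ⟨by ring, r.isLt⟩

theorem blockPosition_inl_lt (hb : b = ℓ * a + a - 1) {m : ℕ} (hm : m < ℓ) (d : Fin a) :
    blockPosition a b τ m (.inl d) < b := by
  have := add_mul_lt_mul_of_lt hm d.isLt
  simp only [blockPosition]
  omega

theorem lt_blockPosition_inr (hab : a ≤ b) (m : ℕ) (d : Fin a) :
    τ < blockPosition a b τ m (.inr d) := by
  have := d.isLt
  simp only [blockPosition]
  split_ifs with hm
  · omega
  · omega
  · have := Nat.le_mul_of_pos_left a (Nat.pos_of_ne_zero hm)
    omega

theorem blockPosition_injective (hab : a ≤ b) (hb : b = ℓ * a + a - 1) (hbτ : b ≤ τ)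
    {m : ℕ} (hm : m < ℓ) : Function.Injective (blockPosition a b τ m) := by
  have hinl_ne_inr : ∀ d e, blockPosition a b τ m (.inl d) ≠ blockPosition a b τ m (.inr e) :=
    fun d e => ne_of_lt ((blockPosition_inl_lt hb hm d).trans_le
      (hbτ.trans (lt_blockPosition_inr hab m e).le))
  rintro (d | d) (e | e) h
  · simp only [blockPosition] at h
    exact congrArg Sum.inl (Fin.ext (by omega))
  · exact (hinl_ne_inr d e h).elim
  · exact (hinl_ne_inr e d h.symm).elim
  · simp only [blockPosition] at h
    refine congrArg Sum.inr (Fin.ext ?_)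
    have := Nat.le_mul_of_pos_left a (Nat.zero_lt_of_lt hm)
    split_ifs at h <;> omega

theorem exists_blockPosition_inl_eq (ha : 0 < a) (hb : b = ℓ * a + a - 1) {v : ℕ}
    (hav : a - 1 ≤ v) (hvb : v < b) : ∃ m < ℓ, ∃ d, blockPosition a b τ m (.inl d) = v := by
  refine ⟨(v - (a - 1)) / a, Nat.div_lt_of_lt_mul (by rw [mul_comm]; omega),
    ⟨(v - (a - 1)) % a, Nat.mod_lt _ ha⟩, ?_⟩
  have := Nat.div_add_mod' (v - (a - 1)) a
  simp only [blockPosition]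
  omega

theorem exists_blockPosition_inr_eq (ha : 0 < a) (hb : b = ℓ * a + a - 1) (haτ : a ≤ τ) {v : ℕ}
    (hτv : τ < v) (hvn : v < τ + 1 - a + b) :
    ∃ m < ℓ, ∃ d, blockPosition a b τ m (.inr d) = v := by
  refine ⟨(v - τ) / a, Nat.div_lt_of_lt_mul (by rw [mul_comm]; omega), ?_⟩
  have hdiv := Nat.div_add_mod' (v - τ) a
  have hmod := Nat.mod_lt (v - τ) ha
  by_cases hm : (v - τ) / a = 0
  · refine ⟨⟨(v - τ) % a - 1, by omega⟩, ?_⟩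
    simp only [blockPosition, hm, if_true]
    rw [hm] at hdiv
    rw [if_neg] <;> omega
  · refine ⟨⟨(v - τ) % a, hmod⟩, ?_⟩
    simp only [blockPosition, hm, if_false]
    omega

theorem exists_blockPosition_eq (ha : 0 < a) (hb : b = ℓ * a + a - 1) (haτ : a ≤ τ) {v : ℕ}
    (hav : a - 1 ≤ v) (hvn : v < τ + 1 - a + b) (hv : v ∉ Set.Ico b (τ + 1)) :
    ∃ m < ℓ, ∃ d, blockPosition a b τ m d = v := by
  rw [Set.mem_Ico] at hv
  rcases lt_or_ge v b with hvb | hvb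
  · obtain ⟨m, hm, d, hd⟩ := exists_blockPosition_inl_eq ha hb hav hvb
    exact ⟨m, hm, .inl d, hd⟩
  · obtain ⟨m, hm, d, hd⟩ := exists_blockPosition_inr_eq ha hb haτ (by omega) hvn
    exact ⟨m, hm, .inr d, hd⟩

variable {F : Type*} [Field F] {ha : 0 < a} {Z1 Z2 : Matrix (Fin a) (Fin a) F}
  {C : Matrix (Fin b) (Fin (τ + 1 - b)) F}

theorem constructionTwoH_info {u : Fin b} {w : Fin (τ + 1 - b)} (hab : a ≤ b)
    (hw : b + (w : ℕ) < τ + 1 - a + b) :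
    constructionTwoH F a b τ ha Z1 Z2 C u ⟨b + w, hw⟩ = C u w := by
  have h1 : ¬ b + (w : ℕ) < a - 1 := by omega
  have h2 : ¬ b + (w : ℕ) < b := by omega
  have h3 : b + (w : ℕ) ≤ τ := by omega
  simp [constructionTwoH, h1, h2, h3]

theorem constructionTwoH_of_col_lt {u : Fin b} {v : Fin (τ + 1 - a + b)} (hv : ↑v < a - 1) :
    constructionTwoH F a b τ ha Z1 Z2 C u v = if (u : ℕ) = v then 1 else 0 := by
  simp only [constructionTwoH, of_apply, hv, dite_true]

theorem constructionTwoH_of_row_lt {u : Fin b} {v : Fin (τ + 1 - a + b)} (hu : ↑u < a - 1)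
    (hv : (v : ℕ) ∉ Set.Ico b (τ + 1)) :
    constructionTwoH F a b τ ha Z1 Z2 C u v = if (u : ℕ) = v then 1 else 0 := by
  rw [Set.mem_Ico] at hv
  have hau : ¬ a - 1 ≤ (u : ℕ) := by omega
  simp only [constructionTwoH, of_apply, hau, false_and, dite_false]
  split_ifs <;> first | rfl | omega

theorem constructionTwoH_blockPosition_inl (hb : b = ℓ * a + a - 1) {m m' : ℕ} (hm' : m' < ℓ)
    {r d : Fin a} (hu : a - 1 + m * a + r < b)
    (hv : blockPosition a b τ m' (.inl d) < τ + 1 - a + b) :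
    constructionTwoH F a b τ ha Z1 Z2 C ⟨a - 1 + m * a + r, hu⟩
      ⟨blockPosition a b τ m' (.inl d), hv⟩ = if m = m' then Z1 r d else 0 := by
  have hrow := add_mul_add_sub_div_mod (a - 1) m r
  have hcol := add_mul_add_sub_div_mod (a - 1) m' d
  have hcol_lt : a - 1 + m' * a + d < b := blockPosition_inl_lt (τ := τ) hb hm' d
  have hrow_ge : a - 1 ≤ a - 1 + m * a + r := by omega
  have hcol_ge : ¬ a - 1 + m' * a + d < a - 1 := by omega
  simp only [constructionTwoH, blockPosition, of_apply, hcol_ge, hcol_lt, hrow, hcol, hrow_ge,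
    true_and, if_false, dite_true, dite_eq_ite]

theorem constructionTwoH_blockPosition_zero_inr (hbτ : b ≤ τ)
    (hZ2 : Z2.BlockTriangular id) {m : ℕ} {r d : Fin a} (hu : a - 1 + m * a + r < b)
    (hv : blockPosition a b τ 0 (.inr d) < τ + 1 - a + b) :
    constructionTwoH F a b τ ha Z1 Z2 C ⟨a - 1 + m * a + r, hu⟩
      ⟨blockPosition a b τ 0 (.inr d), hv⟩ = if m = 0 then Z2 r d else 0 := by
  have hd : ¬ (d : ℕ) + 1 = a := fun hd => by simp [blockPosition, hd] at hv
  have hpos : blockPosition a b τ 0 (.inr d) = τ + 1 + d := by simp [blockPosition, hd]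
  have h1 : ¬ τ + 1 + (d : ℕ) < a - 1 := by omega
  have h2 : ¬ τ + 1 + (d : ℕ) < b := by omega
  have h3 : ¬ τ + 1 + (d : ℕ) ≤ τ := by omega
  have h4 : τ + 1 + (d : ℕ) < τ + a := by omega
  have hrow_ge : a - 1 ≤ a - 1 + m * a + r := by omega
  simp only [constructionTwoH, of_apply, hpos, h1, h2, h3, h4, hrow_ge, true_and,
    dite_true, dite_false]
  rcases m.eq_zero_or_pos with rfl | hm
  · rw [if_pos rfl]
    by_cases hr : (r : ℕ) + 1 = a
    · rw [dif_neg (by omega)]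
      exact (hZ2 (Fin.lt_def.2 (by simp only [id]; omega))).symm
    · rw [dif_pos (by omega)]
      congr 2 <;> simp
  · have := Nat.le_mul_of_pos_left a hm
    rw [dif_neg (by omega), if_neg hm.ne']

theorem constructionTwoH_blockPosition_inr (hbτ : b ≤ τ)
    (hZ2 : Z2.BlockTriangular id) {m m' : ℕ} {r d : Fin a} (hu : a - 1 + m * a + r < b)
    (hv : blockPosition a b τ m' (.inr d) < τ + 1 - a + b) :
    constructionTwoH F a b τ ha Z1 Z2 C ⟨a - 1 + m * a + r, hu⟩
      ⟨blockPosition a b τ m' (.inr d), hv⟩ = if m = m' then Z2 r d else 0 := by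
  have hrow := add_mul_add_sub_div_mod (a - 1) m r
  have hrow_ge : a - 1 ≤ a - 1 + m * a + r := by omega
  rcases m' with _ | m'
  · exact constructionTwoH_blockPosition_zero_inr hbτ hZ2 hu hv
  · have hsub : τ + (m' + 1) * a + d = τ + a + m' * a + d := by ring
    have hcol := add_mul_add_sub_div_mod τ (m' + 1) d
    have hcol' := add_mul_add_sub_div_mod (τ + a) m' d
    rw [← hsub, ← Nat.sub_sub] at hcol'
    have h1 : ¬ τ + (m' + 1) * a + d < a - 1 := by omega
    have h2 : ¬ τ + (m' + 1) * a + d < b := by omega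
    have h3 : ¬ τ + (m' + 1) * a + d ≤ τ := by omega
    have h4 : ¬ τ + (m' + 1) * a + d < τ + a := by omega
    simp only [constructionTwoH, blockPosition, of_apply, Nat.add_one_ne_zero, h1, h2, h3, h4, hrow,
      hcol, hcol', hrow_ge, true_and, if_false, dite_false, dite_eq_ite]

theorem constructionTwoH_blockPosition (hb : b = ℓ * a + a - 1) (hbτ : b ≤ τ)
    (hZ2 : Z2.BlockTriangular id) {m m' : ℕ} (hm' : m' < ℓ) (r : Fin a) (d : Fin a ⊕ Fin a)
    (hu : a - 1 + m * a + r < b) (hv : blockPosition a b τ m' d < τ + 1 - a + b) :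
    constructionTwoH F a b τ ha Z1 Z2 C ⟨a - 1 + m * a + r, hu⟩ ⟨blockPosition a b τ m' d, hv⟩ =
      if m = m' then fromCols Z1 Z2 r d else 0 := by
  rcases d with d | d
  · exact constructionTwoH_blockPosition_inl hb hm' hu hv
  · exact constructionTwoH_blockPosition_inr hbτ hZ2 hu hv

variable {c : Fin (τ + 1 - a + b) → F}

/-- The coordinates of a word on the positions `b, …, τ`, where the parity-check matrix of
Construction 2 equals `C`. -/
def infoPart (c : Fin (τ + 1 - a + b) → F) : Fin (τ + 1 - b) → F :=
  fun w => zeroExtend c (b + w)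

/-- The coordinates of a word on the columns of the `m`-th block `[Z1 | Z2]`, with `0` for the
deleted column. -/
def blockPart (c : Fin (τ + 1 - a + b) → F) (m : ℕ) : Fin a ⊕ Fin a → F :=
  zeroExtend c ∘ blockPosition a b τ m

theorem zeroExtend_add_mulVec_infoPart_eq_zero (hab : a ≤ b)
    (hc : constructionTwoH F a b τ ha Z1 Z2 C *ᵥ c = 0) {u : Fin b} (hu : (u : ℕ) < a - 1) :
    zeroExtend c u + (C *ᵥ infoPart c) u = 0 := by
  have hrow := congrFun hc u
  rw [mulVec, dotProduct_eq_dotProduct_zeroExtend_comp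
    (x := Sum.elim (fun _ : Unit => 1) (C u)) (e := Sum.elim (fun _ => u) (b + ·))] at hrow
  · rw [Sum.comp_elim, sumElim_dotProduct_sumElim] at hrow
    simpa [dotProduct, mulVec, infoPart, Function.comp_def] using hrow
  · refine Function.Injective.sumElim (Function.injective_of_subsingleton _) ?_ ?_
    · exact (add_right_injective b).comp Fin.val_injective
    · intro _ w
      omega
  · rintro (_ | w) hi
    · simp only [Sum.elim_inl] at hi ⊢
      rw [constructionTwoH_of_row_lt hu, if_pos rfl]
      simp
    · exact constructionTwoH_info hab hi
  · intro v hv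
    have hvu : (u : ℕ) ≠ v := fun h => hv ⟨.inl (), h⟩
    have hvC : (v : ℕ) ∉ Set.Ico b (τ + 1) := fun h =>
      hv ⟨.inr ⟨v - b, Nat.sub_lt_sub_right h.1 h.2⟩, Nat.add_sub_of_le h.1⟩
    rw [constructionTwoH_of_row_lt hu hvC, if_neg hvu]

theorem mulVec_blockPart_add_mulVec_infoPart_eq_zero (hab : a ≤ b) (hb : b = ℓ * a + a - 1)
    (hbτ : b ≤ τ) (hZ2 : Z2.BlockTriangular id)
    (hc : constructionTwoH F a b τ ha Z1 Z2 C *ᵥ c = 0) {m : ℕ} (hm : m < ℓ) (r : Fin a)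
    (hu : a - 1 + m * a + r < b) :
    (fromCols Z1 Z2 *ᵥ blockPart c m) r + (C *ᵥ infoPart c) ⟨a - 1 + m * a + r, hu⟩ = 0 := by
  have hrow := congrFun hc ⟨a - 1 + m * a + r, hu⟩
  rw [mulVec, dotProduct_eq_dotProduct_zeroExtend_comp (ι := (Fin a ⊕ Fin a) ⊕ Fin (τ + 1 - b))
    (x := Sum.elim (fromCols Z1 Z2 r) (C ⟨a - 1 + m * a + r, hu⟩))
    (e := Sum.elim (blockPosition a b τ m) (b + ·))] at hrow
  · rwa [Sum.comp_elim, sumElim_dotProduct_sumElim] at hrow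
  · refine (blockPosition_injective hab hb hbτ hm).sumElim
      ((add_right_injective b).comp Fin.val_injective) ?_
    rintro (d | d) w
    · have := blockPosition_inl_lt (τ := τ) hb hm d
      omega
    · have := lt_blockPosition_inr (τ := τ) hab m d
      omega
  · rintro (d | w) hi
    · exact (constructionTwoH_blockPosition hb hbτ hZ2 hm r d hu hi).trans (if_pos rfl)
    · exact constructionTwoH_info hab hi
  · intro v hv
    have hvC : (v : ℕ) ∉ Set.Ico b (τ + 1) := fun h =>
      hv ⟨.inr ⟨v - b, Nat.sub_lt_sub_right h.1 h.2⟩, Nat.add_sub_of_le h.1⟩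
    rcases lt_or_ge (v : ℕ) (a - 1) with hva | hav
    · rw [constructionTwoH_of_col_lt hva, if_neg (by simp only; omega)]
    · obtain ⟨m', hm', d, hd⟩ := exists_blockPosition_eq ha hb (by omega) hav v.isLt hvC
      have hne : m ≠ m' := fun h => hv ⟨.inl d, h ▸ hd⟩
      have hentry := constructionTwoH_blockPosition (ha := ha) (Z1 := Z1) (C := C) hb hbτ hZ2 hm' r
        d hu (hd ▸ v.isLt)
      simpa only [hd, if_neg hne] using hentry

theorem mulVec_infoPart_eq_zero_of_row (hab : a ≤ b)
    (hc : constructionTwoH F a b τ ha Z1 Z2 C *ᵥ c = 0) {u : Fin b} (hu : (u : ℕ) < a - 1)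
    (hcu : zeroExtend c u = 0) : (C *ᵥ infoPart c) u = 0 := by
  simpa only [hcu, zero_add] using zeroExtend_add_mulVec_infoPart_eq_zero hab hc hu

theorem mulVec_infoPart_eq_zero_of_blockRow (hab : a ≤ b) (hb : b = ℓ * a + a - 1) (hbτ : b ≤ τ)
    (hZ1 : Z1.BlockTriangular OrderDual.toDual) (hZ2 : Z2.BlockTriangular id)
    (hc : constructionTwoH F a b τ ha Z1 Z2 C *ᵥ c = 0) {m : ℕ} (hm : m < ℓ) {r : Fin a}
    (hu : a - 1 + m * a + r < b) (hl : ∀ d ≤ r, blockPart c m (.inl d) = 0)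
    (hr : ∀ d ≥ r, blockPart c m (.inr d) = 0) :
    (C *ᵥ infoPart c) ⟨a - 1 + m * a + r, hu⟩ = 0 := by
  have hcheck := mulVec_blockPart_add_mulVec_infoPart_eq_zero hab hb hbτ hZ2 hc hm r hu
  have hleft : (Z1 *ᵥ blockPart c m ∘ Sum.inl) r = 0 :=
    mulVec_apply_eq_zero_of_blockTriangular hZ1 hl
  have hright : (Z2 *ᵥ blockPart c m ∘ Sum.inr) r = 0 :=
    mulVec_apply_eq_zero_of_blockTriangular hZ2 hr
  rwa [fromCols_mulVec, Pi.add_apply, hleft, hright, add_zero, zero_add] at hcheck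

theorem mulVec_infoPart_eq_zero_of_firstBlock (hℓ : 0 < ℓ) (hab : a ≤ b)
    (hb : b = ℓ * a + a - 1) (hbτ : b ≤ τ) (hZ1 : Z1.BlockTriangular OrderDual.toDual)
    (hZ2 : Z2.BlockTriangular id) (hc : constructionTwoH F a b τ ha Z1 Z2 C *ᵥ c = 0)
    (hzero : ∀ v ∈ Set.Ico (a - 1) (2 * a - 1), zeroExtend c v = 0) :
    ∃ hu : 2 * a - 2 < b, (C *ᵥ infoPart c) ⟨2 * a - 2, hu⟩ = 0 := by
  have hal : a ≤ ℓ * a := Nat.le_mul_of_pos_left a hℓ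
  have hrow : a - 1 + 0 * a + (a - 1) = 2 * a - 2 := by omega
  refine ⟨by omega, ?_⟩
  simp only [← hrow]
  refine mulVec_infoPart_eq_zero_of_blockRow (r := ⟨a - 1, by omega⟩) hab hb hbτ hZ1 hZ2 hc hℓ _
    (fun d _ => hzero _ ?_) fun d hd => zeroExtend_of_le c ?_
  · simp only [blockPosition, Set.mem_Ico]
    omega
  · have hda : (d : ℕ) + 1 = a := by
      have := Fin.le_def.1 hd
      simp only at this
      omega
    simp only [blockPosition, hda, if_true, le_refl]

theorem hammingNorm_infoPart_le_card [DecidableEq F] {s : Finset ℕ}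
    (hs : ∀ v ∈ Set.Ico b (τ + 1), zeroExtend c v ≠ 0 → v ∈ s) :
    hammingNorm (infoPart c) ≤ s.card := by
  refine Finset.card_le_card_of_injOn (fun w => b + (w : ℕ)) (fun w hw => ?_)
    ((add_right_injective b).comp Fin.val_injective).injOn
  exact hs _ ⟨Nat.le_add_right _ _, Nat.add_lt_of_lt_sub' w.isLt⟩ (Finset.mem_filter.1 hw).2

theorem infoPart_eq_zero_of_card_le [DecidableEq F] (hℓ : 0 < ℓ) (hab : a ≤ b)
    (hb : b = ℓ * a + a - 1) (hbτ : b ≤ τ) (hZ1 : Z1.BlockTriangular OrderDual.toDual)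
    (hZ2 : Z2.BlockTriangular id) (hC : IsSuperRegular C)
    (hc : constructionTwoH F a b τ ha Z1 Z2 C *ᵥ c = 0) {j : ℕ}
    (hcard : (windowSupport τ c j).card ≤ a) : infoPart c = 0 := by
  have hal : a ≤ ℓ * a := Nat.le_mul_of_pos_left a hℓ
  set S := windowSupport τ c j
  have hzero : ∀ v ≤ τ, v ∉ S → zeroExtend c v = 0 := fun v hv hvS => by
    by_contra h
    exact hvS (mem_windowSupport.2 ⟨by omega, h⟩)
  -- Each of the first `a - 1` symbols outside `S` gives a row of `C` orthogonal to `infoPart c`.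
  -- This suffices if some element of `S` lies in the left half of the first block; otherwise the
  -- last row of that block is orthogonal too, as its entry in the right half lies in the deleted
  -- column.
  let rows := Finset.range (a - 1) \ S
  let top := Finset.range (a - 1) ∩ S
  let info := {v ∈ S | b ≤ v}
  have hinfo : hammingNorm (infoPart c) ≤ info.card :=
    hammingNorm_infoPart_le_card fun v hv hcv =>
      Finset.mem_filter.2 ⟨mem_windowSupport.2 ⟨by have := hv.2; omega, hcv⟩, hv.1⟩
  have hrows_card : rows.card + top.card = a - 1 := by
    rw [Finset.card_sdiff_add_card_inter, Finset.card_range]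
  have hdisj : Disjoint top info := Finset.disjoint_left.2 (by grind)
  have hrows : ∀ u ∈ rows, ∃ hu : u < b, (C *ᵥ infoPart c) ⟨u, hu⟩ = 0 := fun u hu => by
    obtain ⟨hua, huS⟩ := Finset.mem_sdiff.1 hu
    have hua := Finset.mem_range.1 hua
    exact ⟨by omega, mulVec_infoPart_eq_zero_of_row hab hc hua (hzero u (by omega) huS)⟩
  by_cases hmid : ∃ v ∈ S, a - 1 ≤ v ∧ v < 2 * a - 1
  · obtain ⟨v, hvS, hv⟩ := hmid
    have hsub : top ∪ info ⊆ S.erase v := by grind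
    have hsum := Finset.card_le_card hsub
    rw [Finset.card_union_of_disjoint hdisj, Finset.card_erase_of_mem hvS] at hsum
    exact hC.eq_zero_of_mulVec_eq_zero_fin (by omega) hrows
  · have hsum := Finset.card_le_card (show top ∪ info ⊆ S by grind)
    rw [Finset.card_union_of_disjoint hdisj] at hsum
    refine hC.eq_zero_of_mulVec_eq_zero_fin (rows := insert (2 * a - 2) rows) ?_ ?_
    · rw [Finset.card_insert_of_notMem (by grind)]
      omega
    · refine (Finset.forall_mem_insert _ _ _).2
        ⟨mulVec_infoPart_eq_zero_of_firstBlock hℓ hab hb hbτ hZ1 hZ2 hc fun v hv => ?_, hrows⟩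
      exact hzero v (by grind) fun hvS => hmid ⟨v, hvS, hv⟩

/-- The row of the parity-check matrix of Construction 2 in which the column at position `v > τ`
meets the diagonal of its block `Z2`. Row `2 * a - 2` is skipped, since its diagonal entry lies in
the deleted column. -/
def diagonalRow (a τ v : ℕ) : ℕ :=
  if v < τ + a then v + a - 2 - τ else v + a - 1 - τ

theorem diagonalRow_blockPosition_inr {m : ℕ} {d : Fin a}
    (hv : blockPosition a b τ m (.inr d) < τ + 1 - a + b) :
    diagonalRow a τ (blockPosition a b τ m (.inr d)) = a - 1 + m * a + d := by
  rcases m.eq_zero_or_pos with rfl | hm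
  · simp only [blockPosition, if_true] at hv ⊢
    split_ifs at hv ⊢ with hd
    · omega
    · rw [diagonalRow, if_pos] <;> omega
  · have := Nat.le_mul_of_pos_left a hm
    simp only [blockPosition, hm.ne', if_false]
    rw [diagonalRow, if_neg] <;> omega

theorem mulVec_infoPart_eq_zero_of_burst [DecidableEq F] (hab : a ≤ b) (hb : b = ℓ * a + a - 1)
    (hbτ : b ≤ τ) (hZ1 : Z1.BlockTriangular OrderDual.toDual) (hZ2 : Z2.BlockTriangular id)
    (hc : constructionTwoH F a b τ ha Z1 Z2 C *ᵥ c = 0) {j : ℕ}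
    (hbefore : ∀ v < j, zeroExtend c v = 0) (hburst : ∀ v ∈ windowSupport τ c j, v < j + b)
    {u : ℕ} (huj : u < j) (hub : u < b)
    (hdiag : ∀ v ∈ Set.Ico (τ + 1) (j + b), diagonalRow a τ v ≠ u) :
    (C *ᵥ infoPart c) ⟨u, hub⟩ = 0 := by
  rcases lt_or_ge u (a - 1) with hua | hau
  · exact mulVec_infoPart_eq_zero_of_row hab hc hua (hbefore u huj)
  obtain ⟨m, hm, r, rfl⟩ := exists_blockPosition_inl_eq (τ := τ) ha hb hau hub
  refine mulVec_infoPart_eq_zero_of_blockRow hab hb hbτ hZ1 hZ2 hc hm hub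
    (fun d hd => hbefore _ ?_) fun d hd => ?_
  · have := Fin.le_def.1 hd
    simp only [blockPosition] at huj ⊢
    omega
  · by_contra hcd
    have hdn := lt_of_not_ge fun h => hcd (zeroExtend_of_le c h)
    have hpos : blockPosition a b τ m (.inr r) ≤ blockPosition a b τ m (.inr d) := by
      have := Fin.le_def.1 hd
      simp only [blockPosition] at hdn ⊢
      split_ifs at hdn ⊢ <;> omega
    have hd_lt := hburst _ (mem_windowSupport.2 ⟨?_, hcd⟩)
    · exact hdiag _ ⟨lt_blockPosition_inr hab m r, hpos.trans_lt hd_lt⟩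
        (diagonalRow_blockPosition_inr (hpos.trans_lt hdn))
    · simp only [blockPosition] at hdn huj ⊢
      split_ifs at hdn ⊢ with hm0
      · omega
      · omega
      · omega

theorem infoPart_eq_zero_of_burst [DecidableEq F] (hab : a ≤ b) (hb : b = ℓ * a + a - 1)
    (hbτ : b ≤ τ) (hZ1 : Z1.BlockTriangular OrderDual.toDual) (hZ2 : Z2.BlockTriangular id)
    (hC : IsSuperRegular C) (hc : constructionTwoH F a b τ ha Z1 Z2 C *ᵥ c = 0) {j : ℕ}
    (hbefore : ∀ v < j, zeroExtend c v = 0) (hburst : ∀ v ∈ windowSupport τ c j, v < j + b) :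
    infoPart c = 0 := by
  -- Zero symbols in front of the burst make all rows `u < min j b` orthogonal to `infoPart c`,
  -- except those whose diagonal `Z2`-entry is hit by the part of the burst beyond `τ`.
  let diag := (Finset.Ico (τ + 1) (j + b)).image (diagonalRow a τ)
  have hdiag_card : diag.card ≤ j + b - (τ + 1) := Finset.card_image_le.trans_eq (Nat.card_Ico _ _)
  have hrows_card := Finset.le_card_sdiff diag (Finset.range (min j b))
  rw [Finset.card_range] at hrows_card
  have hinfo : hammingNorm (infoPart c) ≤ (Finset.Ico (max j b) (min (j + b) (τ + 1))).card := by
    refine hammingNorm_infoPart_le_card fun v hv hcv => Finset.mem_Ico.2 ⟨max_le ?_ hv.1, ?_⟩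
    · exact not_lt.1 fun h => hcv (hbefore v h)
    · have := hv.2
      exact lt_min (hburst v (mem_windowSupport.2 ⟨by omega, hcv⟩)) hv.2
  rw [Nat.card_Ico] at hinfo
  refine hC.eq_zero_of_mulVec_eq_zero_fin (rows := Finset.range (min j b) \ diag) (by omega)
    fun u hu => ?_
  obtain ⟨hu, hudiag⟩ := Finset.mem_sdiff.1 hu
  obtain ⟨huj, hub⟩ := lt_min_iff.1 (Finset.mem_range.1 hu)
  refine ⟨hub, mulVec_infoPart_eq_zero_of_burst hab hb hbτ hZ1 hZ2 hc hbefore hburst huj hub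
    fun v hv h => hudiag (Finset.mem_image.2 ⟨v, Finset.mem_Ico.2 hv, h⟩)⟩

theorem infoPart_eq_zero [DecidableEq F] (hℓ : 0 < ℓ) (hab : a ≤ b) (hb : b = ℓ * a + a - 1)
    (hbτ : b ≤ τ) (hZ1 : Z1.BlockTriangular OrderDual.toDual) (hZ2 : Z2.BlockTriangular id)
    (hC : IsSuperRegular C) (hc : constructionTwoH F a b τ ha Z1 Z2 C *ᵥ c = 0) {j : ℕ}
    (hbefore : ∀ v < j, zeroExtend c v = 0)
    (hS : (windowSupport τ c j).card ≤ a ∨ ∀ v ∈ windowSupport τ c j, v < j + b) :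
    infoPart c = 0 :=
  hS.elim (infoPart_eq_zero_of_card_le hℓ hab hb hbτ hZ1 hZ2 hC hc)
    (infoPart_eq_zero_of_burst hab hb hbτ hZ1 hZ2 hC hc hbefore)

theorem blockPart_eq_zero [DecidableEq F] (hab : a ≤ b) (hb : b = ℓ * a + a - 1) (hbτ : b ≤ τ)
    (hZ2 : Z2.BlockTriangular id) (hZ : IsMDSGenerator (fromCols Z1 Z2))
    (hc : constructionTwoH F a b τ ha Z1 Z2 C *ᵥ c = 0) (hinfo : infoPart c = 0) {m : ℕ}
    (hm : m < ℓ) (hcard : hammingNorm (blockPart c m) ≤ a) : blockPart c m = 0 := by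
  refine hZ.eq_zero_of_mulVec_eq_zero (by simp) (by simpa using hcard) (funext fun r => ?_)
  have := add_mul_lt_mul_of_lt hm r.isLt
  have hcheck := mulVec_blockPart_add_mulVec_infoPart_eq_zero hab hb hbτ hZ2 hc hm r (by omega)
  simpa only [hinfo, mulVec_zero, Pi.zero_apply, add_zero] using hcheck

theorem hammingNorm_blockPart_le_card_windowSupport [DecidableEq F] (hab : a ≤ b)
    (hb : b = ℓ * a + a - 1) (hbτ : b ≤ τ) {m : ℕ} (hm : m < ℓ) {j : ℕ} (hj : a - 1 + m * a ≤ j) :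
    hammingNorm (blockPart c m) ≤ (windowSupport τ c j).card := by
  refine Finset.card_le_card_of_injOn (blockPosition a b τ m) (fun d hd => ?_)
    (blockPosition_injective hab hb hbτ hm).injOn
  have hcd : zeroExtend c (blockPosition a b τ m d) ≠ 0 := (Finset.mem_filter.1 hd).2
  have hdn := lt_of_not_ge fun h => hcd (zeroExtend_of_le c h)
  refine mem_windowSupport.2 ⟨?_, hcd⟩
  rcases d with d | d <;> simp only [blockPosition] at hdn ⊢
  · omega
  · split_ifs at hdn ⊢ with hm0 <;> omega

theorem hammingNorm_blockPart_le_of_burst [DecidableEq F] (hτb : b + a ≤ τ + 1) {m : ℕ}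
    {r : Fin a} (hbefore : ∀ v < a - 1 + m * a + r, zeroExtend c v = 0)
    (hburst : ∀ v ∈ windowSupport τ c (a - 1 + m * a + r), v < a - 1 + m * a + r + b) :
    hammingNorm (blockPart c m) ≤ a := by
  refine (hammingNorm_le_card_of_inl_or_inr fun d => ?_).trans_eq (Fintype.card_fin a)
  rcases lt_or_ge d r with hd | hd
  · refine .inl (hbefore _ ?_)
    simp only [blockPosition]
    omega
  · refine .inr (by_contra fun hcd => ?_)
    have hdn := lt_of_not_ge fun h => hcd (zeroExtend_of_le c h)
    have hma : m = 0 → m * a = 0 := fun h => by rw [h, zero_mul]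
    have hwindow : blockPosition a b τ m (.inr d) ∈
        Set.Icc (a - 1 + m * a + r + b) (a - 1 + m * a + r + τ) := by
      simp only [blockPosition, Set.mem_Icc] at hdn ⊢
      split_ifs at hdn ⊢ <;> omega
    exact (hburst _ (mem_windowSupport.2 ⟨hwindow.2, hcd⟩)).not_ge hwindow.1

theorem hammingNorm_blockPart_le_of_lt [DecidableEq F] (hb : b = ℓ * a + a - 1) {m : ℕ}
    (hm : m < ℓ) (hzero : ∀ v < b, zeroExtend c v = 0) : hammingNorm (blockPart c m) ≤ a :=
  (hammingNorm_le_card_of_inl_or_inr fun d =>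
    .inl (hzero _ (blockPosition_inl_lt hb hm d))).trans_eq (Fintype.card_fin a)

theorem isDelayDecodable_constructionTwoH [DecidableEq F] (hℓ : 0 < ℓ)
    (hb : b = ℓ * a + a - 1) (hτb : b + a ≤ τ + 1) (hZ1 : Z1.BlockTriangular OrderDual.toDual)
    (hZ2 : Z2.BlockTriangular id) (hZ : IsMDSGenerator (fromCols Z1 Z2)) (hC : IsSuperRegular C) :
    IsDelayDecodable a b τ {c | constructionTwoH F a b τ ha Z1 Z2 C *ᵥ c = 0} := by
  intro c hc j hbefore hS
  have hbτ : b ≤ τ := by omega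
  have hab : a ≤ b := by
    have := Nat.le_mul_of_pos_left a hℓ
    omega
  have hinfo : infoPart c = 0 := infoPart_eq_zero hℓ hab hb hbτ hZ1 hZ2 hC hc hbefore hS
  have hblock : ∀ m < ℓ, hammingNorm (blockPart c m) ≤ a → ∀ d,
      zeroExtend c (blockPosition a b τ m d) = 0 := fun m hm hcard =>
    congrFun (blockPart_eq_zero hab hb hbτ hZ2 hZ hc hinfo hm hcard)
  rcases lt_or_ge j (a - 1) with hja | haj
  · have hcheck := zeroExtend_add_mulVec_infoPart_eq_zero hab hc (u := ⟨j, by omega⟩) hja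
    simpa only [hinfo, mulVec_zero, Pi.zero_apply, add_zero] using hcheck
  rcases lt_or_ge j b with hjb | hbj
  · obtain ⟨m, hm, r, rfl⟩ := exists_blockPosition_inl_eq (τ := τ) ha hb haj hjb
    refine hblock m hm (hS.elim (fun hcard => ?_) ?_) _
    · exact (hammingNorm_blockPart_le_card_windowSupport hab hb hbτ hm
        (Nat.le_add_right _ _)).trans hcard
    · exact hammingNorm_blockPart_le_of_burst hτb hbefore
  rcases le_or_gt j τ with hjτ | hτj
  · simpa only [infoPart, Nat.add_sub_of_le hbj, Pi.zero_apply] using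
      congrFun hinfo ⟨j - b, Nat.sub_lt_sub_right hbj (Nat.lt_succ_of_le hjτ)⟩
  rcases lt_or_ge j (τ + 1 - a + b) with hjn | hnj
  · obtain ⟨m, hm, d, rfl⟩ := exists_blockPosition_inr_eq ha hb (hab.trans hbτ) hτj hjn
    have hcard := hammingNorm_blockPart_le_of_lt hb hm fun v hv => hbefore v (hv.trans_le hbj)
    exact hblock m hm hcard _
  · exact zeroExtend_of_le c hnj

theorem isStreamingCode_constructionTwoH (hℓ : 0 < ℓ) (hb : b = ℓ * a + a - 1)
    (hτb : b + a ≤ τ + 1) (hZ1 : Z1.BlockTriangular OrderDual.toDual)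
    (hZ2 : Z2.BlockTriangular id) (hZ : IsMDSGenerator (fromCols Z1 Z2)) (hC : IsSuperRegular C) :
    IsStreamingCode a b τ
      (diagonalEmbedding {c | constructionTwoH F a b τ ha Z1 Z2 C *ᵥ c = 0}) := by
  classical
  exact isStreamingCode_diagonalEmbedding
    (K := (LinearMap.ker (constructionTwoH F a b τ ha Z1 Z2 C).mulVecLin).toAddSubgroup)
    (isDelayDecodable_constructionTwoH hℓ hb hτb hZ1 hZ2 hZ hC)

end ConstructionTwo

section ZeroBand

variable {F : Type*} {a : ℕ} {Z : Matrix (Fin a) (Fin (2 * a)) F}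

/-- The column index of an `a × 2a` matrix given by a half (left or right) and a position in it. -/
def halvesEmbedding (a : ℕ) : Fin a ⊕ Fin a ↪ Fin (2 * a) :=
  (finSumFinEquiv.trans (finCongr (two_mul a).symm)).toEmbedding

theorem halvesEmbedding_inl (d : Fin a) : (halvesEmbedding a (.inl d) : ℕ) = d := by
  simp [halvesEmbedding]

theorem halvesEmbedding_inr (d : Fin a) : (halvesEmbedding a (.inr d) : ℕ) = a + d := by
  simp [halvesEmbedding, add_comm]

theorem fromCols_submatrix_halvesEmbedding :
    Matrix.fromCols (Z.submatrix id (halvesEmbedding a ∘ Sum.inl))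
      (Z.submatrix id (halvesEmbedding a ∘ Sum.inr)) = Z.submatrix id (halvesEmbedding a) := by
  ext i (d | d) <;> rfl

variable [Zero F]

/-- The condition `z_{ij} = 0` whenever `j ≡ i + s (mod 2a)` for some `1 ≤ s ≤ a - 1`. -/
def HasZeroBand (Z : Matrix (Fin a) (Fin (2 * a)) F) : Prop :=
  ∀ (i : Fin a) (j : Fin (2 * a)),
    (∃ s : ℕ, 1 ≤ s ∧ s ≤ a - 1 ∧ (j : ℕ) = ((i : ℕ) + s) % (2 * a)) → Z i j = 0

theorem HasZeroBand.blockTriangular_left (hZ : HasZeroBand Z) :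
    (Z.submatrix id (halvesEmbedding a ∘ Sum.inl)).BlockTriangular OrderDual.toDual := by
  intro i d hid
  have hid : i < d := hid
  refine hZ i _ ⟨d - i, by omega, by omega, ?_⟩
  rw [Nat.mod_eq_of_lt (by omega), Function.comp_apply, halvesEmbedding_inl]
  omega

theorem HasZeroBand.blockTriangular_right (hZ : HasZeroBand Z) :
    (Z.submatrix id (halvesEmbedding a ∘ Sum.inr)).BlockTriangular id := by
  intro i d hdi
  have hdi : d < i := hdi
  refine hZ i _ ⟨a + d - i, by omega, by omega, ?_⟩
  rw [Nat.mod_eq_of_lt (by omega), Function.comp_apply, halvesEmbedding_inr]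
  omega

end ZeroBand

/-- For `b mod a = a−1` (`b = ℓa + a − 1`, `ℓ ≥ 1`) and
`τ+1−a ≥ b`, the diagonal embedding (SDE with `N = n`, `S = {0,…,n−1}`) of
the code `C^I_{a,b,τ+1}` of Construction 2 (with `n = τ+1−a+b`,
`k = τ+1−a`) is an `(a,b,τ)` streaming code of optimal rate
`(τ+1−a)/(τ+1−a+b)`. -/
theorem de_constructionTwo_is_streaming_code
    (F : Type*) [Field F] (a b τ ℓ : ℕ)
    (ha : 0 < a) (hab : a ≤ b) (hbτ : b ≤ τ)
    (hℓ : 1 ≤ ℓ) (hb : b = ℓ * a + a - 1) (hτb : b ≤ τ + 1 - a)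
    (Z : Matrix (Fin a) (Fin (2 * a)) F)
    (hZband : ∀ (i : Fin a) (j : Fin (2 * a)),
        (∃ s : ℕ, 1 ≤ s ∧ s ≤ a - 1 ∧ (j : ℕ) = ((i : ℕ) + s) % (2 * a)) → Z i j = 0)
    (hZMDS : ∀ cols : Finset (Fin (2 * a)), cols.card = a →
        LinearIndependent F (fun j : cols => fun u => Z u (j : Fin (2 * a))))
    (Z1 Z2 : Matrix (Fin a) (Fin a) F)
    (hZ1 : ∀ (i j : Fin a), Z1 i j = Z i ⟨(j : ℕ), by have := j.isLt; omega⟩)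
    (hZ2 : ∀ (i j : Fin a), Z2 i j = Z i ⟨a + (j : ℕ), by have := j.isLt; omega⟩)
    (C : Matrix (Fin b) (Fin (τ + 1 - b)) F)
    (hC : ∀ (s : ℕ) (ri : Fin s → Fin b) (ci : Fin s → Fin (τ + 1 - b)),
        Function.Injective ri → Function.Injective ci →
        (C.submatrix ri ci).det ≠ 0) :
    -- the diagonal embedding of ker H is an (a,b,τ) streaming code
    (∀ (t : ℤ) (E : Finset ℤ), (↑E ⊆ Set.Icc t (t + (τ : ℤ))) → t ∈ E →
        (E.card ≤ a ∨ ∀ e ∈ E, e ≤ t + (b : ℤ) - 1) →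
        ∀ x y : ℤ → (Fin (τ + 1 - a + b) → F),
          (∀ s : ℤ,
              (constructionTwoH F a b τ ha Z1 Z2 C).mulVec
                (fun i => x (s + ((i : ℕ) : ℤ)) i) = 0) →
          (∀ s : ℤ,
              (constructionTwoH F a b τ ha Z1 Z2 C).mulVec
                (fun i => y (s + ((i : ℕ) : ℤ)) i) = 0) →
          (∀ t' : ℤ, t' < t → x t' = y t') →
          (∀ t' : ℤ, t' ∈ Set.Icc t (t + (τ : ℤ)) → t' ∉ E → x t' = y t') →
          x t = y t)
    ∧
    -- the rate k/n is the optimal rate (τ+1−a)/(τ+1−a+b)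
    ((τ + 1 - a : ℕ) : ℚ) / ((τ + 1 - a + b : ℕ) : ℚ)
      = ((τ + 1 - a : ℕ) : ℚ) / ((τ + 1 - a + b : ℕ) : ℚ) := by
  obtain rfl : Z1 = Z.submatrix id (halvesEmbedding a ∘ Sum.inl) :=
    Matrix.ext fun i d => (hZ1 i d).trans (congrArg (Z i) (Fin.ext (halvesEmbedding_inl d).symm))
  obtain rfl : Z2 = Z.submatrix id (halvesEmbedding a ∘ Sum.inr) :=
    Matrix.ext fun i d => (hZ2 i d).trans (congrArg (Z i) (Fin.ext (halvesEmbedding_inr d).symm))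
  have hband : HasZeroBand Z := hZband
  have hMDS : IsMDSGenerator Z := fun cols hcols =>
    hZMDS cols (hcols.trans (Fintype.card_fin a))
  have hstreaming := isStreamingCode_constructionTwoH (ha := ha) hℓ hb (by omega)
    hband.blockTriangular_left hband.blockTriangular_right
    (fromCols_submatrix_halvesEmbedding ▸ hMDS.submatrix_right (halvesEmbedding a)) hC
  exact ⟨fun t E hE htE hbound x y hx hy => hstreaming t E hE htE hbound x hx y hy, rfl⟩
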